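/- arXiv:1212.4978 — 2 statements merged into one kernel-verified Lean document; each statement's English description precedes it below -/
import Mathlib

section
/- Let K be a field of characteristic ≠ 2 and let λ ∈ K with λ ≠ 1. Set v := (1−λ)/2. Let x11, x12, x21, y11, y12, y21, β ∈ K and define the 2×2 matrices A := [[(λ+1)/2 + x11, x12], [x21, (λ+1)/2 − x11]] and B := [[β + y11, y12], [y21, β − y11]]. Define I1 := (v+x11)·(v−x11) − x12·x21, I2 := (v+x11)²·y12 − 2·(v+x11)·x12·y11 − x12²·y21, I3 := x21²·y12 − 2·x21·(v−x11)·y11 − (v−x11)²·y21, I4 := (v+x11)·x21·y12 − 2·x12·x21·y11 − x12·(v−x11)·y21. Then there exists a nonzero vector w ∈ K² such that A·w = λ·w and B·w is a scalar multiple of w, if and only if I1 = 0, I2 = 0, I3 = 0 and I4 = 0. -/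
/-!
Put `p = v + x11` and `q = v - x11`. Then `A - λ = !![p, x12; x21, q]`, with `p + q = 1 - λ ≠ 0`,
so its kernel has dimension at most one, and it contains `(x12, -p)` and `(q, -x21)` as soon as
`I1 = det (A - λ)` vanishes. A nonzero vector `(a, b)` is an eigenvector of `B` exactly when the
quadratic form `Q (a, b) = y12 * b ^ 2 + 2 * y11 * a * b - y21 * a ^ 2` vanishes at it
(`exists_eigenvalue_iff`). The relations `I2` and `I3` are the values of `Q` at the two kernel
vectors, and `I4` is, modulo `I1`, the value of the associated bilinear form at the pair of them.
-/

/-- The form on the right is the determinant of the matrix with columns `B w` and `w`, where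
`w = (a, b)` and `B = !![β + y11, y12; y21, β - y11]`. -/
lemma exists_eigenvalue_iff {K : Type*} [Field K] (y11 y12 y21 β a b : K)
    (hw : a ≠ 0 ∨ b ≠ 0) :
    (∃ μ : K, (β + y11) * a + y12 * b = μ * a ∧ y21 * a + (β - y11) * b = μ * b) ↔
      y12 * b ^ 2 + 2 * y11 * a * b - y21 * a ^ 2 = 0 := by
  constructor
  · rintro ⟨μ, h1, h2⟩
    linear_combination b * h1 - a * h2
  · intro h
    rcases hw with ha | hb
    · refine ⟨((β + y11) * a + y12 * b) / a, by field_simp, ?_⟩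
      field_simp
      linear_combination -h
    · refine ⟨(y21 * a + (β - y11) * b) / b, ?_, by field_simp⟩
      field_simp
      linear_combination h

/-- If `(a, b) ≠ 0` is orthogonal to `(c, d)`, then `(d, -c)` is a multiple of `(a, b)`. -/
lemma exists_smul_of_orthogonal {K : Type*} [Field K] (a b c d : K)
    (hw : a ≠ 0 ∨ b ≠ 0) (h : c * a + d * b = 0) :
    ∃ s : K, d = s * a ∧ c = -(s * b) := by
  rcases hw with ha | hb
  · refine ⟨d / a, by field_simp, ?_⟩
    field_simp
    linear_combination h
  · refine ⟨-c / b, ?_, by field_simp⟩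
    field_simp
    linear_combination h

/-- The linear-algebra core of Lemma 2: the matrix `A` (of determinant `λ`) has a
common eigenvector with `B` on which `A` acts by `λ`, iff `I1 = I2 = I3 = I4 = 0`. -/
theorem stmt_0 (K : Type*) [Field K] (htwo : (2 : K) ≠ 0)
    (lam : K) (hlam : lam ≠ 1)
    (x11 x12 x21 y11 y12 y21 β : K)
    (v : K) (hv : v = (1 - lam) / 2)
    (A B : Matrix (Fin 2) (Fin 2) K)
    (hA : A = !![(lam + 1) / 2 + x11, x12; x21, (lam + 1) / 2 - x11])
    (hB : B = !![β + y11, y12; y21, β - y11])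
    (I1 I2 I3 I4 : K)
    (hI1 : I1 = (v + x11) * (v - x11) - x12 * x21)
    (hI2 : I2 = (v + x11) ^ 2 * y12 - 2 * (v + x11) * x12 * y11 - x12 ^ 2 * y21)
    (hI3 : I3 = x21 ^ 2 * y12 - 2 * x21 * (v - x11) * y11 - (v - x11) ^ 2 * y21)
    (hI4 : I4 = (v + x11) * x21 * y12 - 2 * x12 * x21 * y11 - x12 * (v - x11) * y21) :
    (∃ w : Fin 2 → K, w ≠ 0 ∧ A.mulVec w = lam • w ∧ ∃ μ : K, B.mulVec w = μ • w) ↔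
      (I1 = 0 ∧ I2 = 0 ∧ I3 = 0 ∧ I4 = 0) := by
  have hlam' : lam = 1 - 2 * v := by rw [hv]; field_simp; ring
  have hhalf : (lam + 1) / 2 = 1 - v := by rw [hlam']; field_simp; ring
  have hpq : v + x11 ≠ 0 ∨ v - x11 ≠ 0 := by
    by_contra! h
    exact hlam (by linear_combination hlam' - h.1 - h.2)
  have key : (∃ w : Fin 2 → K, w ≠ 0 ∧ A.mulVec w = lam • w ∧ ∃ μ : K, B.mulVec w = μ • w) ↔
      ∃ a b : K, (a ≠ 0 ∨ b ≠ 0) ∧ (v + x11) * a + x12 * b = 0 ∧ x21 * a + (v - x11) * b = 0 ∧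
        y12 * b ^ 2 + 2 * y11 * a * b - y21 * a ^ 2 = 0 := by
    have hvec (a b : K) : (![a, b] ≠ 0 ∧ A.mulVec ![a, b] = lam • ![a, b] ∧
        ∃ μ : K, B.mulVec ![a, b] = μ • ![a, b]) ↔
        ((a ≠ 0 ∨ b ≠ 0) ∧ (v + x11) * a + x12 * b = 0 ∧ x21 * a + (v - x11) * b = 0 ∧
        y12 * b ^ 2 + 2 * y11 * a * b - y21 * a ^ 2 = 0) := by
      have h0 : ![a, b] ≠ 0 ↔ (a ≠ 0 ∨ b ≠ 0) := by
        rw [Ne, funext_iff, Fin.forall_fin_two]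
        simp [or_iff_not_imp_left]
      have h1 : A.mulVec ![a, b] = lam • ![a, b] ↔
          ((v + x11) * a + x12 * b = 0 ∧ x21 * a + (v - x11) * b = 0) := by
        rw [hA, hhalf, hlam', funext_iff, Fin.forall_fin_two]
        simp only [Matrix.mulVec, dotProduct, Fin.sum_univ_two, Matrix.of_apply,
          Matrix.cons_val_zero, Matrix.cons_val_one, Pi.smul_apply, smul_eq_mul]
        constructor
        · rintro ⟨h, h'⟩
          exact ⟨by linear_combination h, by linear_combination h'⟩
        · rintro ⟨h, h'⟩
          exact ⟨by linear_combination h, by linear_combination h'⟩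
      have h2 (μ : K) : B.mulVec ![a, b] = μ • ![a, b] ↔
          ((β + y11) * a + y12 * b = μ * a ∧ y21 * a + (β - y11) * b = μ * b) := by
        rw [hB, funext_iff, Fin.forall_fin_two]
        simp [Matrix.mulVec, dotProduct, Fin.sum_univ_two]
      rw [h0, h1, and_assoc]
      simp only [h2]
      exact and_congr_right fun hw => by rw [exists_eigenvalue_iff _ _ _ _ _ _ hw]
    constructor
    · rintro ⟨w, hw⟩
      have hw' : w = ![w 0, w 1] := by ext i; fin_cases i <;> rfl
      rw [hw'] at hw
      exact ⟨w 0, w 1, (hvec _ _).1 hw⟩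
    · rintro ⟨a, b, h⟩
      exact ⟨![a, b], (hvec a b).2 h⟩
  rw [key, hI1, hI2, hI3, hI4]
  constructor
  · rintro ⟨a, b, hw, h1, h2, hQ⟩
    obtain ⟨s, hs, hs'⟩ := exists_smul_of_orthogonal _ _ _ _ hw h1
    obtain ⟨t, ht, ht'⟩ := exists_smul_of_orthogonal _ _ _ _ hw h2
    rw [hs, hs', ht, ht']
    refine ⟨by ring, ?_, ?_, ?_⟩
    · linear_combination s ^ 2 * hQ
    · linear_combination t ^ 2 * hQ
    · linear_combination s * t * hQ
  · rintro ⟨h1, h2, h3, -⟩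
    rcases hpq with hp | hq
    · refine ⟨x12, -(v + x11), Or.inr (neg_ne_zero.2 hp), by ring, ?_, ?_⟩
      · linear_combination -h1
      · linear_combination h2
    · refine ⟨v - x11, -x21, Or.inl hq, ?_, by ring, ?_⟩
      · linear_combination h1
      · linear_combination h3
end

section
/- Let k be a field of characteristic p > 2. The quotient of the polynomial ring k[x11, x12, x21, y11, y12, y21] by the ideal generated by x11² + x12·x21 and x21·y12 + 2·x11·y11 + x12·y21 is an integral domain. -/
open MvPolynomial

/-!
Write `a, b, c, d, e, f` for the variables `X 0, …, X 5`. The cone `a² + bc = 0` is parametrized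
by `a = st`, `b = s²`, `c = -t²`, which pulls the second relation back to the quadric
`q = s²f + 2std - t²e` in `k[s, t, d, e, f]`. This `q` is irreducible, being linear in `f` with
coprime coefficients `s²` and `2std - t²e`, hence prime (`prime_quadric`).

It remains to see that the ideal `I` of the two relations is the full preimage of `(q)` under the
parametrization `φ`. The image of `φ` consists of the polynomials of even degree in `(s, t)`, and
projecting onto this part gives a linear map `ρ : k[s, t, d, e, f] → k[a, …, f]/I` with `ρ 1 = 1`
and `ρ (φ P * h) = P * ρ h` (`evenPart_aeval_mul`). If `φ P = q * h`, then modulo `I`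
`P = ρ (φ P) = ρ (φ J * h) = J * ρ h = 0`, where `J` is the second relation.
So the quotient by `I` embeds into the domain `k[s, t, d, e, f]/(q)`.
-/

noncomputable section
namespace NilpotentCone
variable {R k : Type*} [CommRing R] [Field k] [Algebra k R]

/-- The value of the projection `evenPart` on the monomial `s^m₀ t^m₁ d^m₂ e^m₃ f^m₄`. It is zero
if `m₀ + m₁` is odd; otherwise it is the monomial in `x₀ = st`, `x₁ = s²`, `-x₂ = t²` and
`d, e, f = x₃, x₄, x₅` of degree at most one in `x₀`. -/
def monomialImage (x : Fin 6 → R) (m : Fin 5 →₀ ℕ) : R :=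
  (if Even (m 0) then (if Even (m 1) then 1 else 0) else (if Even (m 1) then 0 else x 0)) *
    x 1 ^ (m 0 / 2) * (-x 2) ^ (m 1 / 2) * x 3 ^ m 2 * x 4 ^ m 3 * x 5 ^ m 4

variable (k) in
/-- The projection of `k[s, t, d, e, f]` onto its part of even degree in `(s, t)`, expressed through
elements `x i` of a `k`-algebra playing the roles of `st, s², -t², d, e, f`. -/
def evenPart (x : Fin 6 → R) : MvPolynomial (Fin 5) k →ₗ[k] R :=
  (basisMonomials (Fin 5) k).constr k (monomialImage x)

lemma evenPart_monomial (x : Fin 6 → R) (m : Fin 5 →₀ ℕ) :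
    evenPart k x (monomial m 1) = monomialImage x m :=
  (basisMonomials (Fin 5) k).constr_basis k (monomialImage x) m

variable (k) in
/-- The parametrization `(st, s², -t², d, e, f)`, with `s, t, d, e, f` the variables
`X 0, …, X 4`. -/
def param : Fin 6 → MvPolynomial (Fin 5) k :=
  ![X 0 * X 1, X 0 ^ 2, -X 1 ^ 2, X 2, X 3, X 4]

lemma evenPart_param_mul (x : Fin 6 → R) (hx : x 0 ^ 2 + x 1 * x 2 = 0) (i : Fin 6)
    (h : MvPolynomial (Fin 5) k) :
    evenPart k x (param k i * h) = x i * evenPart k x h := by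
  have key : evenPart k x ∘ₗ LinearMap.mulLeft k (param k i) =
      LinearMap.mulLeft k (x i) ∘ₗ evenPart k x := by
    refine (basisMonomials (Fin 5) k).ext fun m ↦ ?_
    simp only [coe_basisMonomials, LinearMap.comp_apply, LinearMap.mulLeft_apply,
      evenPart_monomial]
    have h1 (u : ℕ) : (1 + 2 * u) / 2 = u := by lia
    have h1' (u : ℕ) : (2 * u + 1) / 2 = u := by lia
    have h2 (u : ℕ) : (1 + (2 * u + 1)) / 2 = u + 1 := by lia
    have h3 (u : ℕ) : (2 + 2 * u) / 2 = u + 1 := by lia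
    have h4 (u : ℕ) : (2 + (2 * u + 1)) / 2 = u + 1 := by lia
    rcases Nat.even_or_odd' (m 0) with ⟨u, hu | hu⟩ <;>
    rcases Nat.even_or_odd' (m 1) with ⟨v, hv | hv⟩ <;>
    fin_cases i <;>
    simp [param, X, monomial_mul, monomial_pow, evenPart_monomial, monomialImage, hu, hv,
      parity_simps, h1, h1', h2, h3, h4] <;> try ring1
    -- The one case that uses `hx`: multiplying `st` by a monomial of odd degree in both `s` and `t`.
    linear_combination (-x 1 ^ u * (-x 2) ^ v * x 3 ^ m 2 * x 4 ^ m 3 * x 5 ^ m 4) * hx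
  exact LinearMap.congr_fun key h

/-- `evenPart` is linear over `k[a, …, f]`, acting on `k[s, t, d, e, f]` via `param` and on `R`
via `x`. -/
lemma evenPart_aeval_mul (x : Fin 6 → R) (hx : x 0 ^ 2 + x 1 * x 2 = 0)
    (P : MvPolynomial (Fin 6) k) (h : MvPolynomial (Fin 5) k) :
    evenPart k x (aeval (param k) P * h) = aeval x P * evenPart k x h := by
  induction P using MvPolynomial.induction_on generalizing h with
  | C a => simp [C_mul', ← Algebra.smul_def]
  | add P Q hP hQ => simp only [map_add, add_mul, hP, hQ]
  | mul_X P i hP => rw [map_mul (aeval _), map_mul (aeval _), mul_assoc, hP, aeval_X, aeval_X,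
      evenPart_param_mul x hx, mul_assoc]

lemma evenPart_one (x : Fin 6 → R) : evenPart k x 1 = 1 := by
  rw [← C_1, C_apply, evenPart_monomial]
  simp [monomialImage]

lemma prime_quadric :
    Prime (X 0 ^ 2 * X 4 + (C 2 * X 0 * X 1 * X 2 - X 1 ^ 2 * X 3) : MvPolynomial (Fin 5) k) := by
  classical
  refine (irreducible_mul_X_add _ _ _ (by simp) ?_ ?_ ?_).prime
  · intro h
    simpa [vars_X] using vars_pow _ _ h
  · intro h
    rcases Finset.mem_union.1 (vars_sub_subset _ h) with h | h
    · replace h := vars_mul _ _ h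
      simp [vars_X] at h
      replace h := vars_mul _ _ h
      simp [vars_X] at h
      replace h := vars_mul _ _ h
      simp [vars_X] at h
    · replace h := vars_mul _ _ h
      simp [vars_X] at h
      replace h := vars_pow _ _ h
      simp [vars_X] at h
  · refine IsRelPrime.pow_left ((X_prime (i := 0)).irreducible.isRelPrime_iff_not_dvd.2 ?_)
    rintro ⟨g, hg⟩
    simpa using congrArg (eval ![0, 1, 0, 1, 0]) hg

end NilpotentCone

end

open NilpotentCone

/-- The graded-ring computation in the split case of Lemma 5:
`k[x11, x12, x21, y11, y12, y21]/(x11² + x12·x21, x21·y12 + 2·x11·y11 + x12·y21)` is an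
integral domain. Here `X 0 = x11`, `X 1 = x12`, `X 2 = x21`, `X 3 = y11`, `X 4 = y12`,
`X 5 = y21`. -/
theorem stmt_10 (p : ℕ) (hp : p.Prime) (hp2 : 2 < p)
    (k : Type*) [Field k] [CharP k p] :
    IsDomain (MvPolynomial (Fin 6) k ⧸ Ideal.span
      {(X 0 ^ 2 + X 1 * X 2 : MvPolynomial (Fin 6) k),
       X 2 * X 4 + 2 * X 0 * X 3 + X 1 * X 5}) := by
  set F : MvPolynomial (Fin 6) k := X 0 ^ 2 + X 1 * X 2 with hF
  set J : MvPolynomial (Fin 6) k := X 2 * X 4 + 2 * X 0 * X 3 + X 1 * X 5 with hJ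
  set I := Ideal.span {F, J} with hI
  set q : MvPolynomial (Fin 5) k :=
    X 0 ^ 2 * X 4 + (C 2 * X 0 * X 1 * X 2 - X 1 ^ 2 * X 3) with hq
  have hFq : aeval (param k) F = 0 := by
    simp [F, param]; ring
  have hJq : aeval (param k) J = q := by
    simp only [J, q, param, map_add, map_mul, map_ofNat, aeval_X]
    simp; ring
  let x : Fin 6 → MvPolynomial (Fin 6) k ⧸ I := fun i ↦ Ideal.Quotient.mk I (X i)
  have hx (P : MvPolynomial (Fin 6) k) : aeval x P = Ideal.Quotient.mk I P := by
    have : aeval x = Ideal.Quotient.mkₐ k I := by ext i; simp [x]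
    rw [this]; rfl
  have hx0 : x 0 ^ 2 + x 1 * x 2 = 0 := by
    have : Ideal.Quotient.mk I F = 0 :=
      Ideal.Quotient.eq_zero_iff_mem.2 (Ideal.subset_span (by simp))
    simpa [F, x] using this
  have hcomap : I = (Ideal.span {q}).comap (aeval (param k)) := by
    apply le_antisymm
    · rw [hI, Ideal.span_le]
      rintro P (rfl | rfl)
      · simp only [SetLike.mem_coe, Ideal.mem_comap, hFq, zero_mem]
      · simp only [SetLike.mem_coe, Ideal.mem_comap, hJq, Ideal.mem_span_singleton_self]
    · intro P hP
      obtain ⟨h, hh⟩ := Ideal.mem_span_singleton.1 (Ideal.mem_comap.1 hP)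
      have hJ0 : Ideal.Quotient.mk I J = 0 :=
        Ideal.Quotient.eq_zero_iff_mem.2 (Ideal.subset_span (by simp))
      rw [← Ideal.Quotient.eq_zero_iff_mem, ← hx, ← mul_one (aeval x P), ← evenPart_one (k := k) x,
        ← evenPart_aeval_mul x hx0, mul_one, hh, ← hJq, evenPart_aeval_mul x hx0, hx, hJ0, zero_mul]
  have : (Ideal.span {q}).IsPrime :=
    (Ideal.span_singleton_prime prime_quadric.ne_zero).2 prime_quadric
  rw [Ideal.Quotient.isDomain_iff_prime, hcomap]
  exact Ideal.comap_isPrime _ _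
end
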